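/- Let p be an odd prime, E_2 the extraspecial p-group of order p^3 and exponent p^2, and n ≥ 3. Then the Schur multiplier of G = E_2 × (ℤ_p)^{n-3} has order p^{(n-1)(n-2)/2 - 1}. -/

import Mathlib

/-- The kernel of the canonical free presentation `FreeGroup G → G`. -/
def presentationKernel (G : Type u) [Group G] : Subgroup (FreeGroup G) :=
  (FreeGroup.lift (id : G → G)).ker

/-- The Schur multiplier `M(G) = H₂(G, ℤ)` (second integral group homology) of a
group `G`, realised via Hopf's integral formula `H₂(G, ℤ) ≅ (R ⊓ [F, F]) / [F, R]`,
where `F = FreeGroup G` is the canonical free group surjecting onto `G` with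
kernel `R`. -/
def SchurMultiplier (G : Type u) [Group G] : Type u :=
  ↥(presentationKernel G ⊓ commutator (FreeGroup G)) ⧸
    (⁅(⊤ : Subgroup (FreeGroup G)), presentationKernel G⁆.subgroupOf
      (presentationKernel G ⊓ commutator (FreeGroup G)))

/-- A finite `p`-group `H` is extraspecial if its center, derived subgroup and
Frattini subgroup coincide and have order `p`. -/
def IsExtraspecial (p : ℕ) (H : Type*) [Group H] : Prop :=
  Subgroup.center H = commutator H ∧ Subgroup.center H = frattini H ∧
    Nat.card (Subgroup.center H) = p

/-- `H` is (isomorphic to) `E₂`, the extraspecial group of order `p^3` and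
exponent `p^2`. -/
def IsE₂ (p : ℕ) (H : Type*) [Group H] : Prop :=
  IsExtraspecial p H ∧ Nat.card H = p ^ 3 ∧ Monoid.exponent H = p ^ 2

/-!
Write `G = F / R` with `F` free and let `Q = F / [F, R]`. Hopf's formula gives
`|[Q, Q]| = |M(G)| |[G, G]|`, so it is enough to compute `|[Q, Q]|`.

For `G = E₂ × ℤ_p^k` the group `[G, G]` is central, is generated by a `p`-th power and contains all
`p`-th powers; since `p` is odd, this forces its preimage in `Q` to be central. Hence `Q` is a
central extension of the elementary abelian group `V = G / [G, G]`, and commutators in `Q` define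
an alternating form on `V`, so that `|[Q, Q]|` divides `|Λ² V|`. Conversely, `G → V` lifts to a map
from `Q` to the Heisenberg group of the form `∧ : V × V → Λ² V`, whose commutators are the elements
`2 (v ∧ w)` and generate `Λ² V` because `2` is invertible. So `|[Q, Q]| = |Λ² V|`.
-/

open Subgroup
open scoped commutatorElement

/-! ### Commutator calculus -/

theorem dvd_choose_two_of_odd {n : ℕ} (hn : Odd n) : n ∣ n.choose 2 := by
  obtain ⟨k, rfl⟩ := hn
  rw [Nat.choose_two_right, Nat.add_sub_cancel, mul_left_comm, Nat.mul_div_cancel_left _ two_pos]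
  exact dvd_mul_right _ _

section CommutatorCalculus

variable {G H : Type*} [Group G] [Group H] {a b : G}

theorem commutatorElement_pow_right (h : Commute ⁅a, b⁆ b) (n : ℕ) : ⁅a, b ^ n⁆ = ⁅a, b⁆ ^ n := by
  have hconj : a * b * a⁻¹ = ⁅a, b⁆ * b := by rw [commutatorElement_def]; group
  rw [commutatorElement_def, ← conj_pow, hconj, h.mul_pow, mul_inv_cancel_right]

theorem commutatorElement_pow_left (h : Commute ⁅a, b⁆ a) (n : ℕ) : ⁅a ^ n, b⁆ = ⁅a, b⁆ ^ n := by
  have h' : Commute ⁅b, a⁆ a := by simpa only [commutatorElement_inv] using h.inv_left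
  rw [← commutatorElement_inv, commutatorElement_pow_right h', ← inv_pow, commutatorElement_inv]

theorem mul_pow_of_commutatorElement_mem_center (h : ⁅b, a⁆ ∈ center G) (n : ℕ) :
    (a * b) ^ n = a ^ n * b ^ n * ⁅b, a⁆ ^ n.choose 2 := by
  have hcomm (k : ℕ) (g : G) : ⁅b, a⁆ ^ k * g = g * ⁅b, a⁆ ^ k :=
    (mem_center_iff.1 (pow_mem h k) g).symm
  induction n with
  | zero => simp
  | succ n ih =>
    have hswap : b ^ n * a = ⁅b, a⁆ ^ n * a * b ^ n := by
      rw [← commutatorElement_pow_left (mem_center_iff.1 h b).symm, commutatorElement_def]; group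
    calc (a * b) ^ (n + 1) = a ^ n * b ^ n * (⁅b, a⁆ ^ n.choose 2 * (a * b)) := by
          rw [pow_succ, ih, mul_assoc]
      _ = a ^ n * (b ^ n * a) * b * ⁅b, a⁆ ^ n.choose 2 := by simp only [hcomm, mul_assoc]
      _ = a ^ n * (⁅b, a⁆ ^ n * (a * b ^ n * b)) * ⁅b, a⁆ ^ n.choose 2 := by
          simp only [hswap, mul_assoc]
      _ = a ^ (n + 1) * b ^ (n + 1) * ⁅b, a⁆ ^ (n + 1).choose 2 := by
          rw [hcomm, Nat.choose_succ_succ' n 1, Nat.choose_one_right, pow_add ⁅b, a⁆, pow_succ a,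
            pow_succ b]
          simp only [mul_assoc]

theorem commutatorElement_mul_left_of_mem_center (c : G) (h : ⁅b, c⁆ ∈ center G) :
    ⁅a * b, c⁆ = ⁅a, c⁆ * ⁅b, c⁆ := by
  rw [commutatorElement_mul_left_eq_conj_mul, mem_center_iff.1 h, mul_inv_cancel_right,
    mem_center_iff.1 h]

theorem commutatorElement_mul_right_of_mem_center (c : G) (h : ⁅a, c⁆ ∈ center G) :
    ⁅a, b * c⁆ = ⁅a, b⁆ * ⁅a, c⁆ := by
  rw [commutatorElement_mul_right_eq_mul_conj, mul_assoc _ b, mem_center_iff.1 h, mul_assoc,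
    mul_inv_cancel_right]

/-- Conjugation by `a` carries `b` to `⁅a, b⁆ * b` but fixes `b ^ n`; expanding
`(⁅a, b⁆ * b) ^ n`, the correction term is an `n`-th power because `n ∣ n.choose 2`. -/
theorem commutatorElement_pow_eq_one {n : ℕ} (hn : Odd n) (hcomm : Commute a (b ^ n))
    (hcenter : ⁅b, ⁅a, b⁆⁆ ∈ center G) (hpow : ⁅a, b⁆ ^ n ∈ center G) : ⁅a, b⁆ ^ n = 1 := by
  have hcorr : ⁅b, ⁅a, b⁆⁆ ^ n.choose 2 = 1 := by
    obtain ⟨k, hk⟩ := dvd_choose_two_of_odd hn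
    rw [hk, pow_mul, ← commutatorElement_pow_right (mem_center_iff.1 hcenter _).symm,
      Commute.commutator_eq (mem_center_iff.1 hpow b), one_pow]
  have hconj : ⁅a, b⁆ * b = a * b * a⁻¹ := by rw [commutatorElement_def]; group
  have hexpand := mul_pow_of_commutatorElement_mem_center hcenter n
  rwa [hconj, conj_pow, hcomm.eq, mul_inv_cancel_right, hcorr, mul_one, right_eq_mul] at hexpand

theorem commutator_prod_of_isMulCommutative [IsMulCommutative H] :
    commutator (G × H) = (commutator G).prod ⊥ := by
  rw [commutator_def, ← top_prod_top, commutator_prod_prod, ← commutator_def, ← commutator_def,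
    commutator_eq_bot (G := H)]

theorem relIndex_ker_commutator {f : G →* H} (hf : Function.Surjective f) :
    f.ker.relIndex (commutator G) = Nat.card (commutator H) := by
  rw [relIndex_ker, map_commutator_eq, f.range_eq_top.2 hf, commutator_def]

theorem commutatorElement_eq_of_map_eq {f : G →* H} (hker : f.ker ≤ center G) {a a' b b' : G}
    (ha : f a = f a') (hb : f b = f b') : ⁅a, b⁆ = ⁅a', b'⁆ := by
  have hleft {a a' : G} (b : G) (h : f a = f a') : ⁅a, b⁆ = ⁅a', b⁆ := by
    have hz : ⁅a'⁻¹ * a, b⁆ = 1 :=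
      Commute.commutator_eq (mem_center_iff.1 (hker (f.eq_iff.1 h)) b).symm
    rw [← mul_inv_cancel_left a' a,
      commutatorElement_mul_left_of_mem_center b (hz ▸ one_mem _), hz, mul_one]
  rw [hleft b ha, ← commutatorElement_inv, hleft a' hb, commutatorElement_inv]

end CommutatorCalculus

/-! ### Central extensions -/

section CentralExtension

variable {Q G : Type*} [Group Q] [Group G] {q : Q →* G}

theorem commutatorElement_mem_center_of_commute_map (hker : q.ker ≤ center Q) {a b : Q}
    (h : Commute (q a) (q b)) : ⁅a, b⁆ ∈ center Q :=
  hker <| by rw [MonoidHom.mem_ker, map_commutatorElement, h.commutator_eq]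

theorem exists_zpow_mul_of_map_mem_zpowers {a c : Q} (h : q c ∈ zpowers (q a)) :
    ∃ j : ℤ, ∃ r ∈ q.ker, c = a ^ j * r := by
  obtain ⟨j, hj⟩ := h
  exact ⟨j, (a ^ j)⁻¹ * c, by simp [MonoidHom.mem_ker, ← hj], by group⟩

/-- Every lift of an element of `commutator G` is a power of `X ^ n` times a central element, where
`X` lifts `x`, so it suffices to see that `X ^ n` is central. -/
theorem comap_commutator_le_center {n : ℕ} (hn : Odd n) (hq : Function.Surjective q)
    (hker : q.ker ≤ center Q) {x : G} (hx : commutator G ≤ zpowers (x ^ n))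
    (hcenter : commutator G ≤ center G) (hpow : ∀ g : G, g ^ n ∈ commutator G) :
    (commutator G).comap q ≤ center Q := by
  obtain ⟨X, rfl⟩ := hq x
  have hdecomp {c : Q} (hc : q c ∈ commutator G) : ∃ j : ℤ, ∃ r ∈ q.ker, c = (X ^ n) ^ j * r :=
    exists_zpow_mul_of_map_mem_zpowers (by simpa only [map_pow] using hx hc)
  have hcommX {c : Q} (hc : q c ∈ commutator G) : Commute X c := by
    obtain ⟨j, r, hr, rfl⟩ := hdecomp hc
    exact ((Commute.self_pow X n).zpow_right j).mul_right (mem_center_iff.1 (hker hr) X)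
  have hXn : X ^ n ∈ center Q := by
    refine mem_center_iff.2 fun g => ?_
    have hmem : q ⁅X, g⁆ ∈ commutator G := by
      rw [map_commutatorElement]
      exact commutator_mem_commutator (mem_top _) (mem_top _)
    have hcpow : q (⁅X, g⁆ ^ n) = 1 := by
      have h := mem_center_iff.1 (hcenter hmem) (q X)
      rw [map_commutatorElement] at h
      rw [map_pow, map_commutatorElement, ← commutatorElement_pow_left h.symm]
      exact Commute.commutator_eq (mem_center_iff.1 (hcenter (hpow _)) (q g)).symm
    have hone : ⁅X, g⁆ ^ n = 1 := commutatorElement_pow_eq_one hn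
      (hcommX (by rw [map_pow]; exact hpow _))
      (commutatorElement_mem_center_of_commute_map hker (mem_center_iff.1 (hcenter hmem) _))
      (hker hcpow)
    rw [← commutatorElement_pow_left (hcommX hmem).symm, commutatorElement_eq_one_iff_mul_comm]
      at hone
    exact hone.symm
  intro c hc
  obtain ⟨j, r, hr, rfl⟩ := hdecomp hc
  exact mul_mem (zpow_mem hXn j) (hker hr)

end CentralExtension

instance (G : Type*) [Group G] : (presentationKernel G).Normal := MonoidHom.normal_ker _

/-- The quotient `F / [F, R]`, where `F / R` is the canonical free presentation of `G`: a central
extension of `G` that maps to every other one. -/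
abbrev FreeCentralExtension (G : Type*) [Group G] : Type _ :=
  FreeGroup G ⧸ ⁅(⊤ : Subgroup (FreeGroup G)), presentationKernel G⁆

namespace FreeCentralExtension

variable (G : Type*) [Group G]

/-- The projection of the free central extension `F / [F, R]` onto `G`. -/
def proj : FreeCentralExtension G →* G :=
  QuotientGroup.lift _ (FreeGroup.lift id) (commutator_le_right _ (presentationKernel G))

theorem proj_surjective : Function.Surjective (proj G) := fun g =>
  ⟨(FreeGroup.of g : FreeGroup G), FreeGroup.lift_apply_of⟩

theorem ker_proj_le_center : (proj G).ker ≤ center (FreeCentralExtension G) := by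
  intro a
  induction a using QuotientGroup.induction_on with
  | H r =>
    intro hr
    rw [mem_center_iff]
    intro b
    induction b using QuotientGroup.induction_on with
    | H f =>
      have h : ⁅f, r⁆ ∈ ⁅(⊤ : Subgroup (FreeGroup G)), presentationKernel G⁆ :=
        commutator_mem_commutator (mem_top f) hr
      rw [← QuotientGroup.eq_one_iff] at h
      exact commutatorElement_eq_one_iff_mul_comm.1 h

theorem card_commutator :
    Nat.card (commutator (FreeCentralExtension G)) =
      Nat.card (SchurMultiplier G) * Nat.card (commutator G) := by
  set F := FreeGroup G
  set R := presentationKernel G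
  have hN : ⁅(⊤ : Subgroup F), R⁆ ≤ R ⊓ commutator F :=
    le_inf (commutator_le_right _ _) (commutator_mono le_rfl le_top)
  have hQ := relIndex_ker_commutator (QuotientGroup.mk'_surjective ⁅(⊤ : Subgroup F), R⁆)
  have hG : R.relIndex (commutator F) = Nat.card (commutator G) :=
    relIndex_ker_commutator (f := FreeGroup.lift id) fun g => ⟨FreeGroup.of g, by simp⟩
  rw [QuotientGroup.ker_mk'] at hQ
  rw [← hQ, ← relIndex_mul_relIndex _ _ _ hN inf_le_right, inf_relIndex_right, hG]
  rfl

variable {G} {H A : Type*} [Group H] [Group A]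

theorem exists_lift {ψ : H →* A} (hψ : Function.Surjective ψ) (hker : ψ.ker ≤ center H)
    (π : G →* A) : ∃ φ : FreeCentralExtension G →* H, ψ.comp φ = π.comp (proj G) := by
  set Φ : FreeGroup G →* H := FreeGroup.lift fun g => Function.surjInv hψ (π g)
  have hΦ : ψ.comp Φ = π.comp (FreeGroup.lift id) := by
    ext g
    simp [Φ, Function.surjInv_eq hψ]
  have hle : ⁅(⊤ : Subgroup (FreeGroup G)), presentationKernel G⁆ ≤ Φ.ker := by
    rw [commutator_le]
    intro f _ r hr
    have hr' : ψ (Φ r) = 1 := by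
      rw [← MonoidHom.comp_apply, hΦ, MonoidHom.comp_apply, MonoidHom.mem_ker.1 hr, map_one]
    rw [MonoidHom.mem_ker, map_commutatorElement]
    exact Commute.commutator_eq (mem_center_iff.1 (hker hr') _)
  exact ⟨QuotientGroup.lift _ Φ hle, QuotientGroup.monoidHom_ext _ hΦ⟩

theorem card_commutator_dvd {ψ : H →* A} (hψ : Function.Surjective ψ)
    (hker : ψ.ker ≤ center H) {π : G →* A} (hπ : Function.Surjective π) :
    Nat.card (commutator H) ∣ Nat.card (commutator (FreeCentralExtension G)) := by
  obtain ⟨φ, hφ⟩ := exists_lift hψ hker π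
  have hlift (h : H) : ∃ a, ψ (φ a) = ψ h := by
    obtain ⟨a, ha⟩ := (hπ.comp (proj_surjective G)) (ψ h)
    exact ⟨a, (DFunLike.congr_fun hφ a).trans ha⟩
  have hle : commutator H ≤ (commutator (FreeCentralExtension G)).map φ := by
    rw [commutator_def, commutator_le]
    rintro a - b -
    obtain ⟨a', ha⟩ := hlift a
    obtain ⟨b', hb⟩ := hlift b
    refine ⟨⁅a', b'⁆, commutator_mem_commutator (mem_top _) (mem_top _), ?_⟩
    rw [map_commutatorElement, commutatorElement_eq_of_map_eq hker ha hb]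
  exact (card_dvd_of_le hle).trans (card_map_dvd _ _)

end FreeCentralExtension

/-! ### Alternating pairings and the exterior square -/

section ExteriorSquare

open ExteriorAlgebra

variable {R V W : Type*} [CommRing R] [AddCommGroup V] [Module R V] [AddCommGroup W] [Module R W]

/-- An alternating bilinear map, as an alternating map of two arguments; this is the form the
universal property of `⋀[R]^2 V` takes. -/
def alternatingMapOfIsAlt (β : V →ₗ[R] V →ₗ[R] W) (hβ : β.IsAlt) : V [⋀^Fin 2]→ₗ[R] W where
  toFun v := β (v 0) (v 1)
  map_update_add' := by
    intro _ m i x y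
    fin_cases i <;> simp
  map_update_smul' := by
    intro _ m i c x
    fin_cases i <;> simp
  map_eq_zero_of_eq' := by
    intro v i j h hij
    fin_cases i <;> fin_cases j <;> simp_all [hβ _]

variable (R V) in
/-- The wedge product `v ∧ w` of two vectors, as a bilinear map into the exterior square. -/
def wedge : V →ₗ[R] V →ₗ[R] ⋀[R]^2 V :=
  LinearMap.mk₂ R
    (fun v w => ⟨ι R v * ι R w, (pow_two (LinearMap.range (ι R (M := V)))).ge <|
      Submodule.mul_mem_mul (LinearMap.mem_range_self _ v) (LinearMap.mem_range_self _ w)⟩)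
    (fun _ _ _ => Subtype.ext (by simp [add_mul])) (fun _ _ _ => Subtype.ext (by simp))
    (fun _ _ _ => Subtype.ext (by simp [mul_add])) (fun _ _ _ => Subtype.ext (by simp))

theorem wedge_isAlt : (wedge R V).IsAlt := fun v => Subtype.ext (ι_sq_zero v)

theorem ιMulti_two_apply (m : Fin 2 → V) : exteriorPower.ιMulti R 2 m = wedge R V (m 0) (m 1) :=
  Subtype.ext <| (ιMulti_apply m).trans (by simp [wedge])

theorem span_range_wedge : Submodule.span R {x | ∃ v w, wedge R V v w = x} = ⊤ := by
  refine top_unique ((exteriorPower.ιMulti_span R 2 V).ge.trans (Submodule.span_mono ?_))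
  rintro _ ⟨m, rfl⟩
  exact ⟨m 0, m 1, (ιMulti_two_apply m).symm⟩

theorem exists_linearMap_wedge {β : V →ₗ[R] V →ₗ[R] W} (hβ : β.IsAlt) :
    ∃ L : ⋀[R]^2 V →ₗ[R] W, ∀ v w, L (wedge R V v w) = β v w := by
  refine ⟨exteriorPower.alternatingMapLinearEquiv (alternatingMapOfIsAlt β hβ), fun v w => ?_⟩
  exact (congrArg _ (ιMulti_two_apply ![v, w])).symm.trans
    (exteriorPower.alternatingMapLinearEquiv_apply_ιMulti (alternatingMapOfIsAlt β hβ) ![v, w])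

end ExteriorSquare

theorem exists_addMonoidHom_wedge {n : ℕ} {V B : Type*} [AddCommGroup V] [Module (ZMod n) V]
    [AddCommGroup B] (γ : V →+ V →+ B) (hγ : ∀ v, γ v v = 0) :
    ∃ L : ⋀[ZMod n]^2 V →+ B, ∀ v w, L (wedge (ZMod n) V v w) = γ v w := by
  let := AddSubgroup.torsionBy.zmodModule (A := B) (n := n)
  have htorsion (v w : V) : γ v w ∈ AddSubgroup.torsionBy B n := by
    rw [AddSubgroup.torsionBy.nsmul_iff, ← map_nsmul, ZModModule.char_nsmul_eq_zero n w, map_zero]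
  let β : V →ₗ[ZMod n] V →ₗ[ZMod n] AddSubgroup.torsionBy B n :=
    AddMonoidHom.toZModLinearMap n <| AddMonoidHom.mk' (fun v => AddMonoidHom.toZModLinearMap n
      ((γ v).codRestrict (AddSubgroup.torsionBy B n) (htorsion v))) fun v w => by ext x; simp
  obtain ⟨L, hL⟩ := exists_linearMap_wedge (β := β) fun v => Subtype.ext (hγ v)
  exact ⟨(AddSubgroup.torsionBy B n).subtype.comp L.toAddMonoidHom, fun v w =>
    congrArg Subtype.val (hL v w)⟩

/-! ### Heisenberg groups -/

/-- The Heisenberg group of a bilinear map `β : V × V → W`: the set `V × W` with multiplication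
`(v, a) * (w, b) = (v + w, a + b + β v w)`. It is a central extension of `V` by `W`, in
which `(v, a)` and `(w, b)` have commutator `(0, β v w - β w v)`. -/
@[ext]
structure HeisenbergGroup {R V W : Type*} [CommRing R] [AddCommGroup V] [Module R V]
    [AddCommGroup W] [Module R W] (β : V →ₗ[R] V →ₗ[R] W) where
  base : V
  fiber : W

namespace HeisenbergGroup

variable {R V W : Type*} [CommRing R] [AddCommGroup V] [Module R V] [AddCommGroup W] [Module R W]
  {β : V →ₗ[R] V →ₗ[R] W}

instance : Mul (HeisenbergGroup β) :=
  ⟨fun x y => ⟨x.base + y.base, x.fiber + y.fiber + β x.base y.base⟩⟩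

instance : One (HeisenbergGroup β) := ⟨⟨0, 0⟩⟩

instance : Inv (HeisenbergGroup β) := ⟨fun x => ⟨-x.base, -x.fiber + β x.base x.base⟩⟩

theorem mul_def (x y : HeisenbergGroup β) :
    x * y = ⟨x.base + y.base, x.fiber + y.fiber + β x.base y.base⟩ := rfl

theorem one_def : (1 : HeisenbergGroup β) = ⟨0, 0⟩ := rfl

theorem inv_def (x : HeisenbergGroup β) : x⁻¹ = ⟨-x.base, -x.fiber + β x.base x.base⟩ := rfl

instance : Group (HeisenbergGroup β) :=
  Group.ofLeftAxioms
    (fun x y z => by ext <;> simp only [mul_def, map_add, LinearMap.add_apply] <;> abel)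
    (fun x => by ext <;> simp [mul_def, one_def])
    (fun x => by ext <;> simp [mul_def, one_def, inv_def])

theorem commutatorElement_eq (x y : HeisenbergGroup β) :
    ⁅x, y⁆ = ⟨0, β x.base y.base - β y.base x.base⟩ := by
  rw [commutatorElement_def, mul_inv_eq_iff_eq_mul, mul_inv_eq_iff_eq_mul]
  ext <;> simp only [mul_def, zero_add, map_zero, LinearMap.zero_apply, add_zero] <;> abel

variable (β)

/-- The projection of the Heisenberg group onto its base. -/
def proj : HeisenbergGroup β →* Multiplicative V where
  toFun x := .ofAdd x.base
  map_one' := rfl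
  map_mul' _ _ := rfl

theorem proj_surjective : Function.Surjective (proj β) := fun v => ⟨⟨v.toAdd, 0⟩, rfl⟩

theorem ker_proj_le_center : (proj β).ker ≤ center (HeisenbergGroup β) := by
  rintro ⟨v, a⟩ (rfl : v = 0)
  refine mem_center_iff.2 fun y => ?_
  ext <;> simp [mul_def, add_comm]

/-- The inclusion of the central fiber of the Heisenberg group. -/
def incl : Multiplicative W →* HeisenbergGroup β where
  toFun a := ⟨0, a.toAdd⟩
  map_one' := rfl
  map_mul' a b := by ext <;> simp [mul_def]

theorem incl_injective : Function.Injective (incl β) := fun _ _ h => congrArg fiber h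

theorem range_incl_le_commutator (h2 : IsUnit (2 : R)) :
    (incl (wedge R V)).range ≤ commutator (HeisenbergGroup (wedge R V)) := by
  have hcomm (v w : V) : ⁅(⟨v, 0⟩ : HeisenbergGroup (wedge R V)), (⟨w, 0⟩ : HeisenbergGroup _)⁆ =
      incl (wedge R V) (.ofAdd ((2 : R) • wedge R V v w)) := by
    rw [commutatorElement_eq, ← wedge_isAlt.neg v, sub_neg_eq_add, ← two_smul R]
    rfl
  obtain ⟨u, hu⟩ := h2.exists_right_inv
  have hspan (x : ⋀[R]^2 V) (r : R) : incl (wedge R V) (.ofAdd (r • x)) ∈ commutator _ := by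
    induction (span_range_wedge (R := R) (V := V)).ge (Submodule.mem_top (x := x))
      using Submodule.span_induction generalizing r with
    | mem x hx =>
      obtain ⟨v, w, rfl⟩ := hx
      have hhalf : r • wedge R V v w = (2 : R) • wedge R V ((u * r) • v) w := by
        rw [map_smul, LinearMap.smul_apply, smul_smul, ← mul_assoc, hu, one_mul]
      rw [hhalf, ← hcomm]
      exact commutator_mem_commutator (mem_top _) (mem_top _)
    | zero => simp
    | add x y _ _ hx hy => simpa only [smul_add, ofAdd_add, map_mul] using mul_mem (hx r) (hy r)
    | smul s x _ hx => simpa only [smul_smul] using hx (r * s)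
  rintro _ ⟨a, rfl⟩
  simpa only [one_smul, ofAdd_toAdd] using hspan a.toAdd 1

theorem card_exteriorPower_dvd_card_commutator (h2 : IsUnit (2 : R)) :
    Nat.card (⋀[R]^2 V) ∣ Nat.card (commutator (HeisenbergGroup (wedge R V))) :=
  (Nat.card_congr (Multiplicative.ofAdd.trans
    ((incl _).ofInjective (incl_injective _)).toEquiv)).dvd.trans
    (card_dvd_of_le (range_incl_le_commutator h2))

end HeisenbergGroup

/-! ### The Schur multiplier -/

section ElementaryAbelianQuotient

open scoped IsMulCommutative

variable {n : ℕ} {V : Type*} [AddCommGroup V]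

theorem exists_commutatorPairing {Q : Type*} [Group Q] {f : Q →* Multiplicative V}
    (hf : Function.Surjective f) (hker : f.ker ≤ center Q) :
    ∃ γ : V →+ V →+ Additive (center Q), ∀ a b, (γ (f a).toAdd (f b).toAdd).toMul = ⁅a, b⁆ := by
  have hcenter (a b : Q) : ⁅a, b⁆ ∈ center Q :=
    commutatorElement_mem_center_of_commute_map hker (Commute.all _ _)
  set s : V → Q := fun v => Function.surjInv hf (.ofAdd v)
  have hs (v : V) : f (s v) = .ofAdd v := Function.surjInv_eq hf _
  have hadd (v w : V) : f (s (v + w)) = f (s v * s w) := by simp only [map_mul, hs, ofAdd_add]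
  refine ⟨AddMonoidHom.mk' (fun v => AddMonoidHom.mk'
    (fun w => .ofMul ⟨⁅s v, s w⁆, hcenter _ _⟩) fun w w' => ?_) fun v v' => ?_, fun a b => ?_⟩
  · exact Subtype.ext <| (commutatorElement_eq_of_map_eq hker rfl (hadd w w')).trans
      (commutatorElement_mul_right_of_mem_center _ (hcenter _ _))
  · ext w
    exact (commutatorElement_eq_of_map_eq hker (hadd v v') rfl).trans
      (commutatorElement_mul_left_of_mem_center _ (hcenter _ _))
  · exact commutatorElement_eq_of_map_eq hker (hs _) (hs _)

variable [Module (ZMod n) V]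

theorem card_commutator_dvd_card_exteriorPower {Q : Type*} [Group Q] {f : Q →* Multiplicative V}
    (hf : Function.Surjective f) (hker : f.ker ≤ center Q) :
    Nat.card (commutator Q) ∣ Nat.card (⋀[ZMod n]^2 V) := by
  obtain ⟨γ, hγ⟩ := exists_commutatorPairing hf hker
  have hself (v : V) : γ v v = 0 := by
    obtain ⟨a, ha⟩ := hf (.ofAdd v)
    simpa [ha] using hγ a a
  obtain ⟨L, hL⟩ := exists_addMonoidHom_wedge (n := n) γ hself
  set ℓ : Multiplicative (⋀[ZMod n]^2 V) →* Q :=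
    (center Q).subtype.comp (AddMonoidHom.toMultiplicativeLeft L)
  have hle : commutator Q ≤ ℓ.range := by
    rw [commutator_def, commutator_le]
    rintro a - b -
    refine ⟨.ofAdd (wedge (ZMod n) V (f a).toAdd (f b).toAdd), ?_⟩
    rw [← hγ, ← hL]
    rfl
  exact (card_dvd_of_le hle).trans (card_range_dvd ℓ)

theorem card_schurMultiplier_mul_card_commutator (hn : Odd n) {G : Type*} [Group G]
    {f : G →* Multiplicative V} (hf : Function.Surjective f)
    (hker : f.ker.comap (FreeCentralExtension.proj G) ≤ center (FreeCentralExtension G)) :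
    Nat.card (SchurMultiplier G) * Nat.card (commutator G) = Nat.card (⋀[ZMod n]^2 V) := by
  rw [← FreeCentralExtension.card_commutator]
  refine Nat.dvd_antisymm ?_ ?_
  · exact card_commutator_dvd_card_exteriorPower (f := f.comp (FreeCentralExtension.proj G))
      (hf.comp (FreeCentralExtension.proj_surjective G)) (by rwa [← MonoidHom.comap_ker])
  · have h2 : IsUnit (2 : ZMod n) := by
      simpa using (ZMod.isUnit_iff_coprime 2 n).2 hn.coprime_two_left
    exact (HeisenbergGroup.card_exteriorPower_dvd_card_commutator h2).trans
      (FreeCentralExtension.card_commutator_dvd (HeisenbergGroup.proj_surjective _)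
        (HeisenbergGroup.ker_proj_le_center _) hf)

end ElementaryAbelianQuotient

theorem card_exteriorPower_zmod {p m k : ℕ} [Fact p.Prime] {V : Type*} [AddCommGroup V]
    [Module (ZMod p) V] (hV : Nat.card V = p ^ m) : Nat.card (⋀[ZMod p]^k V) = p ^ m.choose k := by
  have hp := Fact.out (p := p.Prime)
  have : Finite V := Nat.finite_of_card_ne_zero (hV ▸ (pow_pos hp.pos m).ne')
  have hrank : Module.finrank (ZMod p) V = m := by
    apply Nat.pow_right_injective hp.two_le
    simpa [hV] using (Module.natCard_eq_pow_finrank (K := ZMod p) (V := V)).symm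
  rw [Module.natCard_eq_pow_finrank (K := ZMod p), exteriorPower.finrank_eq, hrank, Nat.card_zmod]

theorem card_schurMultiplier_mul_card_commutator_of_pow_mem_commutator {p m : ℕ} (hp : p.Prime)
    (hodd : Odd p) {G : Type*} [Group G] {x : G} (hx : commutator G ≤ zpowers (x ^ p))
    (hcenter : commutator G ≤ center G) (hpow : ∀ g : G, g ^ p ∈ commutator G)
    (hindex : (commutator G).index = p ^ m) :
    Nat.card (SchurMultiplier G) * Nat.card (commutator G) = p ^ m.choose 2 := by
  have := Fact.mk hp
  have hof : Function.Surjective (Abelianization.of (G := G)) := QuotientGroup.mk_surjective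
  let : Module (ZMod p) (Additive (Abelianization G)) := AddCommGroup.zmodModule <|
    hof.forall.2 fun g => (QuotientGroup.eq_one_iff _).2 (hpow g)
  have hcentral := comap_commutator_le_center hodd (FreeCentralExtension.proj_surjective G)
    (FreeCentralExtension.ker_proj_le_center G) hx hcenter hpow
  rw [card_schurMultiplier_mul_card_commutator (V := Additive (Abelianization G)) hodd
    (f := Abelianization.of) hof ((Abelianization.ker_of G).symm ▸ hcentral)]
  exact card_exteriorPower_zmod hindex

/-! ### The group `E₂` -/

theorem pow_mem_center_of_index_eq_sq {p : ℕ} (hp : p.Prime) {G : Type*} [Group G]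
    (h : (center G).index = p ^ 2) (g : G) : g ^ p ∈ center G := by
  have hcyclic : ¬IsCyclic (G ⧸ center G) := fun _ => by
    have hcomm := (QuotientGroup.mk' (center G)).isMulCommutative_of_isCyclic_of_ker_le_center
      (QuotientGroup.ker_mk' _).le
    rw [center_eq_top_iff.2 hcomm, index_top] at h
    exact (Nat.one_lt_pow two_ne_zero hp.one_lt).ne h
  rw [not_isCyclic_iff_exponent_eq_prime hp (by rwa [← index_eq_card])] at hcyclic
  rw [← QuotientGroup.eq_one_iff, QuotientGroup.mk_pow, ← hcyclic, Monoid.pow_exponent_eq_one]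

theorem le_zpowers_of_prime_card {G : Type*} [Group G] {K : Subgroup G} (hK : (Nat.card K).Prime)
    {y : G} (hy : y ∈ K) (hne : y ≠ 1) : K ≤ zpowers y := by
  have := Fact.mk hK
  intro z hz
  obtain ⟨j, hj⟩ := mem_zpowers_of_prime_card rfl (g := (⟨y, hy⟩ : K)) (g' := ⟨z, hz⟩)
    fun h => hne (congrArg Subtype.val h)
  exact ⟨j, congrArg Subtype.val hj⟩

namespace IsE₂

variable {p : ℕ} {E : Type*} [Group E]

theorem card_commutator (hE : IsE₂ p E) : Nat.card (commutator E) = p := hE.1.1 ▸ hE.1.2.2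

theorem index_commutator (hp : p.Prime) (hE : IsE₂ p E) : (commutator E).index = p ^ 2 := by
  have h := (commutator E).card_mul_index
  rw [hE.card_commutator, hE.2.1, pow_succ' p 2] at h
  exact Nat.eq_of_mul_eq_mul_left hp.pos h

theorem pow_mem_commutator (hp : p.Prime) (hE : IsE₂ p E) (g : E) : g ^ p ∈ commutator E :=
  hE.1.1 ▸ pow_mem_center_of_index_eq_sq hp (hE.1.1 ▸ hE.index_commutator hp) g

theorem exists_commutator_le_zpowers_pow (hp : p.Prime) (hE : IsE₂ p E) :
    ∃ x : E, commutator E ≤ zpowers (x ^ p) := by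
  obtain ⟨x, hx⟩ : ∃ x : E, x ^ p ≠ 1 := by
    by_contra! h
    have hdvd := Nat.le_of_dvd hp.pos (Monoid.exponent_dvd_of_forall_pow_eq_one h)
    rw [hE.2.2] at hdvd
    exact (lt_self_pow₀ hp.one_lt one_lt_two).not_ge hdvd
  exact ⟨x, le_zpowers_of_prime_card (hE.card_commutator ▸ hp) (hE.pow_mem_commutator hp x) hx⟩

theorem card_schurMultiplier_prod_mul (hp : p.Prime) (hodd : Odd p) {k : ℕ} {A : Type*}
    [CommGroup A] (hE : IsE₂ p E) (hA : ∀ a : A, a ^ p = 1) (hcardA : Nat.card A = p ^ k) :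
    Nat.card (SchurMultiplier (E × A)) * p = p ^ (k + 2).choose 2 := by
  have hprod : commutator (E × A) = (commutator E).prod ⊥ := commutator_prod_of_isMulCommutative
  obtain ⟨x, hx⟩ := hE.exists_commutator_le_zpowers_pow hp
  have hle : commutator (E × A) ≤ zpowers ((x, (1 : A)) ^ p) := by
    rw [hprod]
    rintro ⟨g, a⟩ ⟨hg, rfl : a = 1⟩
    obtain ⟨j, rfl⟩ := hx hg
    exact ⟨j, by simp⟩
  have hcenter : commutator (E × A) ≤ center (E × A) := by
    rw [hprod, Subgroup.center_prod, hE.1.1]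
    exact prod_mono le_rfl bot_le
  have hpow (g : E × A) : g ^ p ∈ commutator (E × A) :=
    hprod ▸ ⟨hE.pow_mem_commutator hp g.1, hA g.2⟩
  have hindex : (commutator (E × A)).index = p ^ (2 + k) := by
    rw [hprod, index_prod, hE.index_commutator hp, index_bot, hcardA, pow_add]
  have hcard : Nat.card (commutator (E × A)) = p := by
    rw [hprod, Nat.card_congr (prodEquiv _ _).toEquiv, Nat.card_prod, card_bot, mul_one,
      hE.card_commutator]
  rw [add_comm k, ← card_schurMultiplier_mul_card_commutator_of_pow_mem_commutator hp hodd hle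
    hcenter hpow hindex, hcard]

end IsE₂

/-- The Schur multiplier of `E₂ × ℤ_p^(n-3)` (`p` odd, `n ≥ 3`) has order
`p^((n-1)(n-2)/2 - 1)`. -/
theorem schurMultiplier_E₂_times_elementary {p n : ℕ} (hp : p.Prime) (hodd : Odd p)
    (hn : 3 ≤ n) {E : Type*} [Group E] (hE : IsE₂ p E) :
    Nat.card (SchurMultiplier (E × (Fin (n - 3) → Multiplicative (ZMod p)))) =
      p ^ ((n - 1) * (n - 2) / 2 - 1) := by
  obtain ⟨k, rfl⟩ := Nat.exists_eq_add_of_le' hn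
  have hpow (a : Fin k → Multiplicative (ZMod p)) : a ^ p = 1 :=
    funext fun i => ZModModule.char_nsmul_eq_zero p (a i).toAdd
  have hcard : Nat.card (Fin k → Multiplicative (ZMod p)) = p ^ k := by
    rw [Nat.card_fun, Nat.card_congr Multiplicative.toAdd, Nat.card_zmod, Nat.card_fin]
  have hchoose : (k + 3 - 1) * (k + 3 - 2) / 2 = (k + 2).choose 2 := (Nat.choose_two_right _).symm
  have hpos : 0 < (k + 2).choose 2 := Nat.choose_pos (Nat.le_add_left 2 k)
  refine Nat.eq_of_mul_eq_mul_right hp.pos ?_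
  rw [← pow_succ, hchoose, Nat.sub_add_cancel hpos]
  exact hE.card_schurMultiplier_prod_mul hp hodd hpow hcard
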